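/- Fix k ≥ 1. There exists a constant C > 0 (depending only on k) such that the following holds: for every real normed vector space X with von Neumann–Jordan constant at most ε + 1 (ε ≥ 0), every linear map Λ : ℝᵏ → X (ℝᵏ with the Euclidean norm) with ‖Λ‖ ≤ 1, writing x₁, …, x_k for the images of the standard basis vectors under Λ, every y ∈ X with ‖y‖ ≤ 1, and all real numbers a₁, …, a_k: |[∑ᵢ aᵢxᵢ, y] − ∑ᵢ aᵢ[xᵢ, y]| ≤ (36kε + Cε²)·(1 + ∑ᵢ aᵢ²). -/

import Mathlib

/-!
In an inner product space the bracket is four times the inner product, and in general its failure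
to be bilinear is controlled by the failure of the parallelogram law. If the von Neumann–Jordan
constant is at most `M`, subtracting the parallelogram law for `(u - y, v)` from the one for
`(u + y, v)` shows that `u ↦ [u, y]` is midpoint affine up to an error `K` of order `M (M - 1)`.
The function `g t = [t x, y] - t [x, y]` vanishes at `0` and `1`, and every point of `[0, 1]` is the
midpoint of an endpoint and another point of `[0, 1]`, so `sup |g| ≤ (sup |g| + K) / 2`, whence
`|g| ≤ K` there. The identity `[t x, y] = t² [t⁻¹ y, x]` carries this over to `t > 1`.
Additivity comes from comparing both `[p, y] + [q, y]` and `[p + q, y] + [0, y]` with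
`2 [(p + q) / 2, y]`; orthogonality bounds the norms of the partial sums, so that summing costs one
such error per term.
-/

open Finset Set

section Bracket

variable {X : Type*} [SeminormedAddCommGroup X]

/-- The bracket `[a, b]`, which is four times the inner product when the norm is Euclidean. -/
def normBracket (a b : X) : ℝ := ‖a + b‖ ^ 2 - ‖a - b‖ ^ 2

lemma normBracket_comm (a b : X) : normBracket a b = normBracket b a := by
  rw [normBracket, normBracket, add_comm a b, norm_sub_rev]

@[simp]
lemma normBracket_zero_left (b : X) : normBracket 0 b = 0 := by
  simp [normBracket]

lemma normBracket_neg_left (a b : X) : normBracket (-a) b = -normBracket a b := by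
  rw [normBracket, normBracket, neg_add_eq_sub, norm_sub_rev, ← neg_add', norm_neg, neg_sub]

lemma normBracket_smul_smul [NormedSpace ℝ X] (t : ℝ) (a b : X) :
    normBracket (t • a) (t • b) = t ^ 2 * normBracket a b := by
  simp only [normBracket, ← smul_add, ← smul_sub, norm_smul, mul_pow, Real.norm_eq_abs, sq_abs,
    mul_sub]

lemma normBracket_smul_left_eq_sq_mul [NormedSpace ℝ X] {t : ℝ} (ht : t ≠ 0) (a b : X) :
    normBracket (t • a) b = t ^ 2 * normBracket (t⁻¹ • b) a := by
  rw [normBracket_comm (t⁻¹ • b), ← normBracket_smul_smul, smul_inv_smul₀ ht]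

@[fun_prop]
lemma continuous_normBracket_left (b : X) : Continuous fun a ↦ normBracket a b := by
  unfold normBracket
  fun_prop

end Bracket

lemma abs_le_of_approx_midpoint_Icc {g : ℝ → ℝ} {K : ℝ} (h₀ : g 0 = 0) (h₁ : g 1 = 0)
    (hg : BddAbove ((fun t ↦ |g t|) '' Icc 0 1))
    (hmid : ∀ u ∈ Icc (0 : ℝ) 1, ∀ v ∈ Icc (0 : ℝ) 1, |g u + g v - 2 * g ((u + v) / 2)| ≤ K)
    {t : ℝ} (ht : t ∈ Icc (0 : ℝ) 1) : |g t| ≤ K := by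
  set S := sSup ((fun t ↦ |g t|) '' Icc 0 1)
  have le_S {u : ℝ} (hu : u ∈ Icc (0 : ℝ) 1) : |g u| ≤ S := le_csSup hg (mem_image_of_mem _ hu)
  have halving {u e : ℝ} (hu : u ∈ Icc (0 : ℝ) 1) (he : e ∈ Icc (0 : ℝ) 1) (hge : g e = 0) :
      |g ((u + e) / 2)| ≤ (S + K) / 2 := by
    have hK := abs_le.1 (hmid u hu e he)
    have hS := abs_le.1 (le_S hu)
    rw [abs_le]
    constructor <;> linarith
  have S_le : S ≤ (S + K) / 2 := by
    refine csSup_le ((Set.nonempty_Icc.2 zero_le_one).image _) ?_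
    rintro _ ⟨u, ⟨hu₀, hu₁⟩, rfl⟩
    rcases le_total u (1 / 2) with hu | hu
    · simpa using halving (u := 2 * u) ⟨by linarith, by linarith⟩ (left_mem_Icc.2 zero_le_one) h₀
    · simpa using
        halving (u := 2 * u - 1) ⟨by linarith, by linarith⟩ (right_mem_Icc.2 zero_le_one) h₁
  linarith [le_S ht]

/-- `X` has von Neumann–Jordan constant at most `M`. Only the upper inequality is recorded, in a
division-free form: applied to `a + b` and `a - b`, it yields the lower one. -/
def VonNeumannJordanLE (X : Type*) [SeminormedAddCommGroup X] (M : ℝ) : Prop :=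
  ∀ a b : X, ‖a + b‖ ^ 2 + ‖a - b‖ ^ 2 ≤ 2 * M * (‖a‖ ^ 2 + ‖b‖ ^ 2)

lemma vonNeumannJordanLE_of_div_le {X : Type*} [NormedAddCommGroup X] {M : ℝ}
    (h : ∀ a b : X, ¬(a = 0 ∧ b = 0) →
      (‖a + b‖ ^ 2 + ‖a - b‖ ^ 2) / (2 * (‖a‖ ^ 2 + ‖b‖ ^ 2)) ≤ M) :
    VonNeumannJordanLE X M := by
  intro a b
  by_cases hab : a = 0 ∧ b = 0
  · simp [hab]
  · have hpos : 0 < ‖a‖ ^ 2 + ‖b‖ ^ 2 := by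
      rcases not_and_or.1 hab with ha | hb
      · have := norm_pos_iff.2 ha
        positivity
      · have := norm_pos_iff.2 hb
        positivity
    linarith [(div_le_iff₀ (by positivity)).1 (h a b hab)]

namespace VonNeumannJordanLE

variable {X : Type*} [SeminormedAddCommGroup X] [NormedSpace ℝ X] {M : ℝ}

lemma abs_parallelogram_sub_le (h : VonNeumannJordanLE X M) (hM : 1 ≤ M) (a b : X) :
    |‖a + b‖ ^ 2 + ‖a - b‖ ^ 2 - 2 * (‖a‖ ^ 2 + ‖b‖ ^ 2)| ≤
      2 * (M - 1) * (‖a‖ ^ 2 + ‖b‖ ^ 2) := by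
  have upper := h a b
  have lower : 2 * (‖a‖ ^ 2 + ‖b‖ ^ 2) ≤ M * (‖a + b‖ ^ 2 + ‖a - b‖ ^ 2) := by
    have := h (a + b) (a - b)
    rw [add_add_sub_cancel, add_sub_sub_cancel, ← two_smul ℝ a, ← two_smul ℝ b, norm_smul,
      norm_smul, Real.norm_two] at this
    linarith
  rw [abs_le]
  constructor
  · rcases le_total (‖a + b‖ ^ 2 + ‖a - b‖ ^ 2) (2 * (‖a‖ ^ 2 + ‖b‖ ^ 2)) with hle | hle
    · linarith [mul_le_mul_of_nonneg_left hle (sub_nonneg.2 hM)]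
    · have : 0 ≤ (M - 1) * (‖a‖ ^ 2 + ‖b‖ ^ 2) := mul_nonneg (sub_nonneg.2 hM) (by positivity)
      linarith
  · linarith

lemma abs_normBracket_add_add_sub_le (h : VonNeumannJordanLE X M) (hM : 1 ≤ M) (u v y : X) :
    |normBracket (u + v) y + normBracket (u - v) y - 2 * normBracket u y| ≤
      4 * (M * (M - 1)) * (‖u‖ ^ 2 + ‖v‖ ^ 2 + ‖y‖ ^ 2) := by
  have hM' : 0 ≤ M - 1 := sub_nonneg.2 hM
  have plus := abs_le.1 (h.abs_parallelogram_sub_le hM (u + y) v)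
  have minus := abs_le.1 (h.abs_parallelogram_sub_le hM (u - y) v)
  have base : (M - 1) * (‖u + y‖ ^ 2 + ‖u - y‖ ^ 2) ≤
      (M - 1) * (2 * M * (‖u‖ ^ 2 + ‖y‖ ^ 2)) := by gcongr; exact h u y
  have hv : (M - 1) * ‖v‖ ^ 2 ≤ M * (M - 1) * ‖v‖ ^ 2 := by
    gcongr; exact le_mul_of_one_le_left hM' hM
  simp only [normBracket, add_right_comm u v y, sub_right_comm u v y, add_sub_right_comm u v y,
    sub_add_eq_add_sub u v y]
  rw [abs_le]
  constructor <;> linarith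

lemma abs_normBracket_smul_sub_le_of_mem_Icc (h : VonNeumannJordanLE X M) (hM : 1 ≤ M) (x y : X)
    {t : ℝ} (ht : t ∈ Icc (0 : ℝ) 1) :
    |normBracket (t • x) y - t * normBracket x y| ≤ 4 * (M * (M - 1)) * (‖x‖ ^ 2 + ‖y‖ ^ 2) := by
  refine abs_le_of_approx_midpoint_Icc (g := fun t ↦ normBracket (t • x) y - t * normBracket x y)
    (by simp) (by simp) ?bounded ?midpoint ht
  case bounded => exact isCompact_Icc.bddAbove_image (by fun_prop)
  case midpoint =>
    intro u hu v hv
    have : 0 ≤ M * (M - 1) := mul_nonneg (by linarith) (by linarith)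
    have hsq : ((u + v) / 2) ^ 2 + ((u - v) / 2) ^ 2 ≤ 1 := by
      nlinarith [pow_le_one₀ hu.1 hu.2 (n := 2), pow_le_one₀ hv.1 hv.2 (n := 2)]
    have hx : ‖((u + v) / 2) • x‖ ^ 2 + ‖((u - v) / 2) • x‖ ^ 2 ≤ ‖x‖ ^ 2 := by
      simp only [norm_smul, mul_pow, Real.norm_eq_abs, sq_abs, ← add_mul]
      exact mul_le_of_le_one_left (sq_nonneg _) hsq
    have hmid := h.abs_normBracket_add_add_sub_le hM (((u + v) / 2) • x) (((u - v) / 2) • x) y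
    rw [← add_smul, ← sub_smul, show (u + v) / 2 + (u - v) / 2 = u by ring,
      show (u + v) / 2 - (u - v) / 2 = v by ring] at hmid
    calc _ = |normBracket (u • x) y + normBracket (v • x) y
            - 2 * normBracket (((u + v) / 2) • x) y| := by congr 1; ring
      _ ≤ _ := hmid
      _ ≤ _ := by gcongr

lemma abs_normBracket_smul_sub_le (h : VonNeumannJordanLE X M) (hM : 1 ≤ M) (x y : X) (t : ℝ) :
    |normBracket (t • x) y - t * normBracket x y| ≤
      4 * (M * (M - 1)) * (1 + t ^ 2) * (‖x‖ ^ 2 + ‖y‖ ^ 2) := by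
  wlog ht : 0 ≤ t generalizing t
  · have := this (-t) (by linarith)
    rwa [neg_smul, normBracket_neg_left, neg_mul, ← neg_sub', abs_neg, neg_sq] at this
  set K := 4 * (M * (M - 1)) * (‖x‖ ^ 2 + ‖y‖ ^ 2) with hK
  have hK₀ : 0 ≤ K := by
    have : 0 ≤ M * (M - 1) := mul_nonneg (by linarith) (by linarith)
    positivity
  suffices |normBracket (t • x) y - t * normBracket x y| ≤ (1 + t ^ 2) * K by linarith
  rcases le_total t 1 with ht₁ | ht₁
  · calc _ ≤ K := h.abs_normBracket_smul_sub_le_of_mem_Icc hM x y ⟨ht, ht₁⟩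
      _ ≤ (1 + t ^ 2) * K := le_mul_of_one_le_left hK₀ (by nlinarith)
  · have ht₀ : t ≠ 0 := by positivity
    have hinv := h.abs_normBracket_smul_sub_le_of_mem_Icc hM y x
      ⟨inv_nonneg.2 ht, inv_le_one_of_one_le₀ ht₁⟩
    rw [add_comm (‖y‖ ^ 2), ← hK] at hinv
    calc |normBracket (t • x) y - t * normBracket x y|
        = t ^ 2 * |normBracket (t⁻¹ • y) x - t⁻¹ * normBracket y x| := by
          rw [normBracket_smul_left_eq_sq_mul ht₀, normBracket_comm x y, ← abs_sq t, ← abs_mul]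
          congr 1
          rw [abs_sq]
          field_simp
      _ ≤ t ^ 2 * K := by gcongr
      _ ≤ (1 + t ^ 2) * K := by gcongr; linarith

lemma abs_normBracket_add_sub_le (h : VonNeumannJordanLE X M) (hM : 1 ≤ M) (p q y : X) :
    |normBracket (p + q) y - (normBracket p y + normBracket q y)| ≤
      M * (M - 1) * (3 * ‖p + q‖ ^ 2 + ‖p - q‖ ^ 2 + 8 * ‖y‖ ^ 2) := by
  set u : X := (2⁻¹ : ℝ) • (p + q) with hu
  set v : X := (2⁻¹ : ℝ) • (p - q) with hv
  have norm_u : ‖u‖ ^ 2 = ‖p + q‖ ^ 2 / 4 := by rw [hu, norm_smul]; norm_num; ring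
  have norm_v : ‖v‖ ^ 2 = ‖p - q‖ ^ 2 / 4 := by rw [hv, norm_smul]; norm_num; ring
  have split := abs_le.1 (h.abs_normBracket_add_add_sub_le hM u v y)
  have double := abs_le.1 (h.abs_normBracket_add_add_sub_le hM u u y)
  rw [show u + v = p by module, show u - v = q by module, norm_u, norm_v] at split
  rw [show u + u = p + q by module, sub_self, normBracket_zero_left, norm_u] at double
  rw [abs_le]
  constructor <;> linarith

variable {E ι : Type*} [SeminormedAddCommGroup E] [InnerProductSpace ℝ E]

lemma abs_normBracket_map_add_sub_le (h : VonNeumannJordanLE X M) (hM : 1 ≤ M) {Λ : E →L[ℝ] X}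
    (hΛ : ‖Λ‖ ≤ 1) {p q : E} (hpq : inner ℝ p q = 0) (y : X) :
    |normBracket (Λ (p + q)) y - (normBracket (Λ p) y + normBracket (Λ q) y)| ≤
      4 * (M * (M - 1)) * (‖p + q‖ ^ 2 + 2 * ‖y‖ ^ 2) := by
  have : 0 ≤ M * (M - 1) := mul_nonneg (by linarith) (by linarith)
  have contraction (w : E) : ‖Λ w‖ ≤ ‖w‖ := by
    simpa using Λ.le_of_opNorm_le hΛ w
  have norm_sub : ‖p - q‖ = ‖p + q‖ := norm_sub_eq_norm_add (by rwa [real_inner_comm])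
  calc _ ≤ M * (M - 1) * (3 * ‖Λ (p + q)‖ ^ 2 + ‖Λ (p - q)‖ ^ 2 + 8 * ‖y‖ ^ 2) := by
        simpa only [map_add, map_sub] using h.abs_normBracket_add_sub_le hM (Λ p) (Λ q) y
    _ ≤ M * (M - 1) * (3 * ‖p + q‖ ^ 2 + ‖p - q‖ ^ 2 + 8 * ‖y‖ ^ 2) := by
        gcongr <;> apply contraction
    _ = _ := by rw [norm_sub]; ring

lemma abs_normBracket_map_sum_sub_sum_le (h : VonNeumannJordanLE X M) (hM : 1 ≤ M)
    {Λ : E →L[ℝ] X} (hΛ : ‖Λ‖ ≤ 1) {w : ι → E} (hw : Pairwise fun i j ↦ inner ℝ (w i) (w j) = 0)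
    (y : X) (s : Finset ι) :
    |normBracket (Λ (∑ i ∈ s, w i)) y - ∑ i ∈ s, normBracket (Λ (w i)) y| ≤
      #s * (4 * (M * (M - 1)) * (‖∑ i ∈ s, w i‖ ^ 2 + 2 * ‖y‖ ^ 2)) := by
  classical
  induction s using Finset.induction_on with
  | empty => simp
  | insert i s his ih =>
    have : 0 ≤ M * (M - 1) := mul_nonneg (by linarith) (by linarith)
    rw [sum_insert his, sum_insert his, card_insert_of_notMem his]
    set p := ∑ j ∈ s, w j
    have orth : inner ℝ (w i) p = 0 := by
      rw [inner_sum]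
      exact sum_eq_zero fun j hj ↦ hw (ne_of_mem_of_not_mem hj his).symm
    have norm_p : ‖p‖ ^ 2 ≤ ‖w i + p‖ ^ 2 := by
      rw [norm_add_sq_real, orth]
      linarith [sq_nonneg ‖w i‖]
    have hadd := abs_le.1 (h.abs_normBracket_map_add_sub_le hM hΛ orth y)
    have hsum := abs_le.1 <| ih.trans <|
      show _ ≤ #s * (4 * (M * (M - 1)) * (‖w i + p‖ ^ 2 + 2 * ‖y‖ ^ 2)) by gcongr
    push_cast
    rw [abs_le]
    constructor <;> linarith

lemma abs_sum_normBracket_smul_sub_le (h : VonNeumannJordanLE X M) (hM : 1 ≤ M) (s : Finset ι)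
    {x : ι → X} (hx : ∀ i ∈ s, ‖x i‖ ≤ 1) (y : X) (a : ι → ℝ) :
    |∑ i ∈ s, normBracket (a i • x i) y - ∑ i ∈ s, a i * normBracket (x i) y| ≤
      #s * (4 * (M * (M - 1)) * (1 + ∑ i ∈ s, a i ^ 2) * (1 + ‖y‖ ^ 2)) := by
  have : 0 ≤ M * (M - 1) := mul_nonneg (by linarith) (by linarith)
  rw [← sum_sub_distrib, ← nsmul_eq_mul]
  refine (abs_sum_le_sum_abs _ _).trans (sum_le_card_nsmul _ _ _ fun i hi ↦ ?_)
  refine (h.abs_normBracket_smul_sub_le hM (x i) y (a i)).trans ?_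
  gcongr
  · exact single_le_sum (f := fun j ↦ a j ^ 2) (fun j _ ↦ sq_nonneg (a j)) hi
  · exact pow_le_one₀ (norm_nonneg _) (hx i hi)

end VonNeumannJordanLE

theorem bracket_approx_linear_general {X E ι : Type*} [SeminormedAddCommGroup X] [NormedSpace ℝ X]
    [SeminormedAddCommGroup E] [InnerProductSpace ℝ E] {M : ℝ} (hM : 1 ≤ M)
    (h : VonNeumannJordanLE X M) {Λ : E →L[ℝ] X} (hΛ : ‖Λ‖ ≤ 1) {v : ι → E}
    (hv : Orthonormal ℝ v) {y : X} (hy : ‖y‖ ≤ 1) (s : Finset ι) (a : ι → ℝ) :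
    |normBracket (∑ i ∈ s, a i • Λ (v i)) y - ∑ i ∈ s, a i * normBracket (Λ (v i)) y| ≤
      16 * #s * (M * (M - 1)) * (1 + ∑ i ∈ s, a i ^ 2) := by
  set A := ∑ i ∈ s, a i ^ 2
  have : 0 ≤ M * (M - 1) := mul_nonneg (by linarith) (by linarith)
  have hA : 0 ≤ A := sum_nonneg fun i _ ↦ sq_nonneg (a i)
  have orth : Pairwise fun i j ↦ inner ℝ (a i • v i) (a j • v j) = 0 := by
    intro i j hij
    simp only [real_inner_smul_left, real_inner_smul_right, hv.inner_eq_zero hij, mul_zero]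
  have norm_sum : ‖∑ i ∈ s, a i • v i‖ ^ 2 = A := by
    rw [← real_inner_self_eq_norm_sq, hv.inner_sum]
    exact sum_congr rfl fun i _ ↦ (sq (a i)).symm
  have norm_image (i : ι) : ‖Λ (v i)‖ ≤ 1 := by
    simpa [hv.norm_eq_one i] using Λ.le_of_opNorm_le hΛ (v i)
  have additive := h.abs_normBracket_map_sum_sub_sum_le hM hΛ orth y s
  simp only [map_sum, map_smul, norm_sum] at additive
  have homogeneous := h.abs_sum_normBracket_smul_sub_le hM s (fun i _ ↦ norm_image i) y a
  calc _ ≤ #s * (4 * (M * (M - 1)) * (A + 2 * ‖y‖ ^ 2)) +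
        #s * (4 * (M * (M - 1)) * (1 + A) * (1 + ‖y‖ ^ 2)) :=
        (abs_sub_le _ _ _).trans (add_le_add additive homogeneous)
    _ ≤ #s * (4 * (M * (M - 1)) * (A + 2 * 1 ^ 2)) +
        #s * (4 * (M * (M - 1)) * (1 + A) * (1 + 1 ^ 2)) := by gcongr
    _ ≤ 16 * #s * (M * (M - 1)) * (1 + A) := by
        have : 0 ≤ #s * (M * (M - 1)) * A := by positivity
        linarith

/-- **Approximate linearity of the bracket** (Lemma 3.1). For each `k ≥ 1` there is a
constant `C > 0` such that in any real normed vector space with von Neumann–Jordan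
constant at most `ε + 1`, if `x₁, …, x_k` are the images of the standard basis of
Euclidean `ℝᵏ` under a linear map of norm at most `1`, `‖y‖ ≤ 1`, and `a₁, …, a_k ∈ ℝ`,
then `|[∑ aᵢxᵢ, y] − ∑ aᵢ[xᵢ, y]| ≤ (36kε + Cε²)(1 + ∑ aᵢ²)`,
where `[a, b] = ‖a+b‖² − ‖a−b‖²`. -/
theorem bracket_approx_linear (k : ℕ) (hk : 1 ≤ k) :
    ∃ C : ℝ, 0 < C ∧
      ∀ (X : Type) (_ : NormedAddCommGroup X) (_ : NormedSpace ℝ X)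
        (ε : ℝ), 0 ≤ ε →
        (∀ a b : X, ¬(a = 0 ∧ b = 0) →
          1 / (ε + 1) ≤ (‖a + b‖ ^ 2 + ‖a - b‖ ^ 2) / (2 * (‖a‖ ^ 2 + ‖b‖ ^ 2)) ∧
          (‖a + b‖ ^ 2 + ‖a - b‖ ^ 2) / (2 * (‖a‖ ^ 2 + ‖b‖ ^ 2)) ≤ ε + 1) →
        ∀ Λ : EuclideanSpace ℝ (Fin k) →L[ℝ] X, ‖Λ‖ ≤ 1 →
        ∀ x : Fin k → X, (∀ i, x i = Λ (EuclideanSpace.single i 1)) →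
        ∀ y : X, ‖y‖ ≤ 1 →
        ∀ a : Fin k → ℝ,
          |(‖(∑ i, a i • x i) + y‖ ^ 2 - ‖(∑ i, a i • x i) - y‖ ^ 2) -
              ∑ i, a i * (‖x i + y‖ ^ 2 - ‖x i - y‖ ^ 2)| ≤
            (36 * k * ε + C * ε ^ 2) * (1 + ∑ i, (a i) ^ 2) := by
  have : (0 : ℝ) < k := Nat.cast_pos.2 hk
  refine ⟨16 * k, by positivity, fun X _ _ ε hε hJ Λ hΛ x hx y hy a ↦ ?_⟩
  obtain rfl : x = fun i ↦ Λ (EuclideanSpace.single i 1) := funext hx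
  have hX : VonNeumannJordanLE X (ε + 1) :=
    vonNeumannJordanLE_of_div_le fun a b hab ↦ (hJ a b hab).2
  have : 0 ≤ ∑ i, a i ^ 2 := sum_nonneg fun i _ ↦ sq_nonneg (a i)
  calc _ ≤ 16 * #(univ : Finset (Fin k)) * ((ε + 1) * (ε + 1 - 1)) * (1 + ∑ i, a i ^ 2) :=
        bracket_approx_linear_general (by linarith) hX hΛ EuclideanSpace.orthonormal_single hy _ a
    _ = (16 * k * ε + 16 * k * ε ^ 2) * (1 + ∑ i, a i ^ 2) := by
        rw [card_univ, Fintype.card_fin]; ring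
    _ ≤ _ := by gcongr; norm_num
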